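/- Let α be a type, Δ : List α → Bool, and let S and E be finite sets of lists over α. Suppose (s, t, a) ∈ S × S × α is a witness of inconsistency: the rows of s and t agree on E (Δ(s ++ e) = Δ(t ++ e) for all e ∈ E), but there is some e ∈ E with Δ(s ++ [a] ++ e) ≠ Δ(t ++ [a] ++ e). Let E' = E ∪ {a :: e} for such an e. Then the number of distinct rows of elements of S with respect to E' is strictly greater than the number of distinct rows of elements of S with respect to E. -/

import Mathlib

/-- The row of `s` with respect to the set `E` of separating sequences:
the function assigning to each `e ∈ E` the table entry `Δ (s ++ e)`
(and `none` outside of `E`). -/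
def row {β : Type*} [DecidableEq β] (Δ : List β → Bool) (E : Finset (List β))
    (s : List β) : List β → Option Bool :=
  fun e => if e ∈ E then some (Δ (s ++ e)) else none

/-!
Adding columns to the table only refines the relation of having the same row, so the old rows are
the image of the new ones under some map, and this map identifies the new rows of the two witnesses.
A table with finitely many columns has finitely many rows, so the image is strictly smaller.
-/

section Image

variable {α β γ : Type*}

theorem ncard_image_lt_of_not_injOn {f : α → β} {S : Set α} (hS : S.Finite)
    (hf : ¬ S.InjOn f) : (f '' S).ncard < S.ncard :=
  (Set.ncard_image_le hS).lt_of_ne fun h => hf ((Set.ncard_image_iff hS).1 h)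

theorem ncard_image_lt_ncard_image_of_factorsThrough {f : α → β} {g : α → γ} {S : Set α}
    (hS : (g '' S).Finite) (hfg : f.FactorsThrough g) {s t : α} (hs : s ∈ S) (ht : t ∈ S)
    (hf : f s = f t) (hg : g s ≠ g t) : (f '' S).ncard < (g '' S).ncard := by
  have : Nonempty β := ⟨f s⟩
  obtain ⟨φ, rfl⟩ := (Function.factorsThrough_iff f).1 hfg
  rw [Set.image_comp]
  exact ncard_image_lt_of_not_injOn hS fun hφ =>
    hg (hφ (Set.mem_image_of_mem g hs) (Set.mem_image_of_mem g ht) hf)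

end Image

section Row

variable {α : Type*} [DecidableEq α] (Δ : List α → Bool)

theorem row_eq_row_iff {E : Finset (List α)} {s t : List α} :
    row Δ E s = row Δ E t ↔ ∀ e ∈ E, Δ (s ++ e) = Δ (t ++ e) := by
  simp only [row, funext_iff]
  refine forall_congr' fun e => ?_
  by_cases he : e ∈ E <;> simp [he]

theorem row_factorsThrough_row_of_subset {E E' : Finset (List α)} (h : E ⊆ E') :
    (row Δ E).FactorsThrough (row Δ E') := fun _ _ hst =>
  (row_eq_row_iff Δ).2 fun e he => (row_eq_row_iff Δ).1 hst e (h he)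

theorem finite_range_row (E : Finset (List α)) : (Set.range (row Δ E)).Finite := by
  let restrictedRow : List α → E → Bool := fun s e => Δ (s ++ e)
  have hfactors : (row Δ E).FactorsThrough restrictedRow := fun _ _ hst =>
    (row_eq_row_iff Δ).2 fun e he => congrFun hst ⟨e, he⟩
  obtain ⟨φ, hφ⟩ := (Function.factorsThrough_iff (row Δ E)).1 hfactors
  rw [hφ, Set.range_comp]
  exact (Set.toFinite (Set.range restrictedRow)).image φ

theorem stmt10_general {S : Set (List α)} {E E' : Finset (List α)} (hE : E ⊆ E')
    {s t : List α} (hs : s ∈ S) (ht : t ∈ S) (hagree : ∀ e ∈ E, Δ (s ++ e) = Δ (t ++ e))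
    {w : List α} (hw : w ∈ E') (hdiff : Δ (s ++ w) ≠ Δ (t ++ w)) :
    (row Δ E '' S).ncard < (row Δ E' '' S).ncard := by
  have hfinite : (row Δ E' '' S).Finite :=
    (finite_range_row Δ E').subset (Set.image_subset_range _ _)
  have hsplit : row Δ E' s ≠ row Δ E' t := fun h => hdiff ((row_eq_row_iff Δ).1 h w hw)
  exact ncard_image_lt_ncard_image_of_factorsThrough hfinite
    (row_factorsThrough_row_of_subset Δ hE) hs ht ((row_eq_row_iff Δ).2 hagree) hsplit

end Row

theorem stmt10 {α : Type*} [DecidableEq α] (Δ : List α → Bool) (S E : Finset (List α))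
    (s t : List α) (a : α) (hs : s ∈ S) (ht : t ∈ S)
    (hagree : ∀ e ∈ E, Δ (s ++ e) = Δ (t ++ e))
    (e : List α) (he : e ∈ E)
    (hdiff : Δ (s ++ [a] ++ e) ≠ Δ (t ++ [a] ++ e)) :
    (row Δ E '' ↑S).ncard < (row Δ (insert (a :: e) E) '' ↑S).ncard := by
  exact stmt10_general Δ (Finset.subset_insert _ _) hs ht hagree
    (Finset.mem_insert_self _ _) (by simpa using hdiff)
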